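/- Let T(W) = ν̂(|W|)W with ν̂ ∈ C³([0,∞)) such that ν̂'(s)/s is bounded near 0 (hence ν̂'(0) = 0). Define S_φ(ψ) = T(φ+ψ) − T(φ) − DT(φ)ψ. If 4|ν̂'(s)| + |ν̂''(s)|s ≤ c₇ for all s ≥ 0, then |S_φ(ψ₂) − S_φ(ψ₁)| ≤ c₇ |ψ₂ − ψ₁| (|ψ₁| + |ψ₂|) for all φ, ψ₁, ψ₂ ∈ ℝ². -/

import Mathlib

noncomputable section

/-- `T(W) = ν̂(|W|)W` on `ℝ²`. -/
def Tmap (ν : ℝ → ℝ) (W : EuclideanSpace ℝ (Fin 2)) : EuclideanSpace ℝ (Fin 2) :=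
  ν ‖W‖ • W

/-- `S_φ(ψ) = T(φ+ψ) − T(φ) − DT(φ)ψ`. -/
def Smap (ν : ℝ → ℝ) (φ ψ : EuclideanSpace ℝ (Fin 2)) : EuclideanSpace ℝ (Fin 2) :=
  Tmap ν (φ + ψ) - Tmap ν φ - fderiv ℝ (Tmap ν) φ ψ

abbrev EV := EuclideanSpace ℝ (Fin 2)

lemma hasFDerivAt_norm_aux (W : EV) (hW : W ≠ 0) :
    HasFDerivAt (fun x : EV => ‖x‖) (‖W‖⁻¹ • innerSL ℝ W) W := by
  have h := (hasStrictFDerivAt_norm_sq W).hasFDerivAt.sqrt (by simpa using hW)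
  have hn : ‖W‖ ≠ 0 := by simpa using hW
  simp only [Real.sqrt_sq (norm_nonneg _)] at h
  convert! h using 1
  ext v
  simp
  field_simp

/-- The candidate derivative of `T`. -/
def Amap (ν : ℝ → ℝ) (W : EV) : EV →L[ℝ] EV :=
  ν ‖W‖ • ContinuousLinearMap.id ℝ EV +
    (deriv ν ‖W‖ * ‖W‖⁻¹) • (innerSL ℝ W).smulRight W

lemma deriv_zero_aux (ν : ℝ → ℝ) (ctil : ℝ) (hC3 : ContDiff ℝ 3 ν)
    (hb : ∀ s > (0:ℝ), |deriv ν s| / s ≤ ctil) : deriv ν 0 = 0 := by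
  have hc : Continuous (deriv ν) := hC3.continuous_deriv (by norm_num)
  have h1 : Filter.Tendsto (fun s => |deriv ν s|) (nhdsWithin 0 (Set.Ioi 0)) (nhds |deriv ν 0|) :=
    (hc.abs.tendsto 0).mono_left nhdsWithin_le_nhds
  have h2 : Filter.Tendsto (fun s : ℝ => ctil * s) (nhdsWithin 0 (Set.Ioi 0)) (nhds (ctil * 0)) :=
    ((continuous_const.mul continuous_id).tendsto (0:ℝ)).mono_left nhdsWithin_le_nhds
  have h3 : |deriv ν 0| ≤ ctil * 0 := by
    refine le_of_tendsto_of_tendsto h1 h2 ?_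
    filter_upwards [self_mem_nhdsWithin] with s hs
    exact (div_le_iff₀ hs).1 (hb s hs)
  simpa using h3

lemma nu_norm_zero (ν : ℝ → ℝ) (hd : Differentiable ℝ ν) (h0 : deriv ν 0 = 0) :
    HasFDerivAt (fun x : EV => ν ‖x‖) (0 : EV →L[ℝ] ℝ) 0 := by
  have h := (hd 0).hasDerivAt
  rw [h0, hasDerivAt_iff_isLittleO] at h
  rw [hasFDerivAt_iff_isLittleO]
  have ht : Filter.Tendsto (fun x : EV => ‖x‖) (nhds 0) (nhds 0) := by
    simpa using (continuous_norm.tendsto (0 : EV))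
  have := h.comp_tendsto ht
  simp [Function.comp_def] at this ⊢
  exact Asymptotics.isLittleO_norm_right.1 this

lemma hasFDerivAt_T (ν : ℝ → ℝ) (hd : Differentiable ℝ ν) (h0 : deriv ν 0 = 0) (W : EV) :
    HasFDerivAt (Tmap ν) (Amap ν W) W := by
  unfold Tmap
  by_cases hW : W = 0
  · subst hW
    convert! (nu_norm_zero ν hd h0).smul (hasFDerivAt_id (0 : EV)) using 1
    ext v
    simp [Amap]
  · have h1 := (hd ‖W‖).hasDerivAt.comp_hasFDerivAt W (hasFDerivAt_norm_aux W hW)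
    convert! h1.smul (hasFDerivAt_id W) using 1
    ext v
    simp [Amap]
    ring

lemma hasFDerivAt_A_zero (ν : ℝ → ℝ) (ctil : ℝ) (hd : Differentiable ℝ ν) (h0 : deriv ν 0 = 0)
    (hb : ∀ s > (0:ℝ), |deriv ν s| / s ≤ ctil) (h : EV) :
    HasFDerivAt (fun W => Amap ν W h) (0 : EV →L[ℝ] EV) 0 := by
  have h1 : HasFDerivAt (fun W : EV => ν ‖W‖ • h) (0 : EV →L[ℝ] EV) 0 := by
    convert! (nu_norm_zero ν hd h0).smul_const h using 1
    ext v
    simp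
  have h2 : HasFDerivAt (fun W : EV => (deriv ν ‖W‖ * ‖W‖⁻¹ * inner ℝ W h) • W)
      (0 : EV →L[ℝ] EV) 0 := by
    rw [hasFDerivAt_iff_isLittleO]
    have hO : (fun W : EV => (deriv ν ‖W‖ * ‖W‖⁻¹ * inner ℝ W h) • W) =O[nhds 0]
        (fun W : EV => ‖W‖ ^ 2) := by
      refine Asymptotics.IsBigO.of_bound (ctil * ‖h‖) (Filter.Eventually.of_forall fun W => ?_)
      by_cases hW : W = 0
      · simp [hW]
      have hp : 0 < ‖W‖ := norm_pos_iff.2 hW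
      have := hb _ hp
      rw [norm_smul, norm_mul, norm_mul, norm_inv, norm_norm, norm_pow, norm_norm]
      calc ‖deriv ν ‖W‖‖ * ‖W‖⁻¹ * ‖inner ℝ W h‖ * ‖W‖
          ≤ ctil * (‖W‖ * ‖h‖) * ‖W‖ := by
            have h3 : ‖inner ℝ W h‖ ≤ ‖W‖ * ‖h‖ := norm_inner_le_norm W h
            have h4 : ‖deriv ν ‖W‖‖ * ‖W‖⁻¹ ≤ ctil := by
              simpa [div_eq_mul_inv] using this
            have h5 : 0 ≤ ctil := le_trans (by positivity) h4
            gcongr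
        _ = _ := by ring
    have ho : (fun W : EV => ‖W‖ ^ 2) =o[nhds 0] (fun W : EV => W) := by
      have := Asymptotics.isLittleO_norm_pow_id (E' := EV) (n := 2) (by norm_num)
      exact this
    simpa using hO.trans_isLittleO ho
  convert! h1.add h2 using 1
  · ext W
    simp [Amap, mul_assoc]
  · simp

lemma hasFDerivAt_A (ν : ℝ → ℝ) (c₇ : ℝ) (hd : Differentiable ℝ ν)
    (hd2 : Differentiable ℝ (deriv ν))
    (h7 : ∀ s ≥ (0:ℝ), 4 * |deriv ν s| + |deriv (deriv ν) s| * s ≤ c₇) (h W : EV) (hW : W ≠ 0) :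
    ∃ D : EV →L[ℝ] EV, HasFDerivAt (fun W => Amap ν W h) D W ∧ ‖D‖ ≤ c₇ * ‖h‖ := by
  have hp : 0 < ‖W‖ := norm_pos_iff.2 hW
  have hn := hasFDerivAt_norm_aux W hW
  have h1 := ((hd ‖W‖).hasDerivAt.comp_hasFDerivAt W hn).smul_const h
  have hg := ((hd2 ‖W‖).hasDerivAt.mul (hasDerivAt_inv hp.ne')).comp_hasFDerivAt W hn
  have hi : HasFDerivAt (fun W : EV => inner ℝ W h) (innerSL ℝ h) W := by
    have := (innerSL ℝ h).hasFDerivAt (x := W)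
    convert! this using 1
    ext x
    exact real_inner_comm _ _
  have h2 := (hg.mul hi).smul (hasFDerivAt_id W)
  have h3 := h1.add h2
  have hfun : (fun W => Amap ν W h) = (fun y : EV => (ν ∘ norm) y • h) +
      ((deriv ν * fun y => y⁻¹) ∘ norm * fun W : EV => inner ℝ W h) • id := by
    ext W
    simp [Amap, mul_assoc]
  rw [hfun]
  refine ⟨_, h3, ?_⟩
  · have hc0 : 0 ≤ c₇ := le_trans (by positivity) (h7 _ hp.le)
    refine ContinuousLinearMap.opNorm_le_bound _ (by positivity) fun k => ?_
    have key := h7 _ hp.le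
    set r := ‖W‖ with hr
    set a := deriv ν r
    set b := deriv (deriv ν) r
    have e : ∀ D : EV, D = (a * r⁻¹ * inner ℝ W k) • h + (a * r⁻¹ * inner ℝ h k) • W
        + (a * r⁻¹ * inner ℝ W h) • k
        + ((b * r⁻¹ - a * (r ^ 2)⁻¹) * (r⁻¹ * inner ℝ W k) * inner ℝ W h) • W →
        ‖D‖ ≤ c₇ * ‖h‖ * ‖k‖ := by
      rintro D rfl
      have i1 : |inner ℝ W k| ≤ r * ‖k‖ := abs_real_inner_le_norm _ _
      have i2 : |inner ℝ h k| ≤ ‖h‖ * ‖k‖ := abs_real_inner_le_norm _ _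
      have i3 : |inner ℝ W h| ≤ r * ‖h‖ := abs_real_inner_le_norm _ _
      have j1 : ‖(a * r⁻¹ * inner ℝ W k) • h‖ ≤ |a| * (‖h‖ * ‖k‖) := by
        rw [norm_smul, norm_mul, norm_mul, norm_inv]
        simp only [Real.norm_eq_abs, abs_of_pos hp]
        calc |a| * r⁻¹ * |inner ℝ W k| * ‖h‖ ≤ |a| * r⁻¹ * (r * ‖k‖) * ‖h‖ := by gcongr
          _ = _ := by field_simp
      have j2 : ‖(a * r⁻¹ * inner ℝ h k) • W‖ ≤ |a| * (‖h‖ * ‖k‖) := by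
        rw [norm_smul, norm_mul, norm_mul, norm_inv, ← hr]
        simp only [Real.norm_eq_abs, abs_of_pos hp]
        calc |a| * r⁻¹ * |inner ℝ h k| * r ≤ |a| * r⁻¹ * (‖h‖ * ‖k‖) * r := by gcongr
          _ = _ := by field_simp
      have j3 : ‖(a * r⁻¹ * inner ℝ W h) • k‖ ≤ |a| * (‖h‖ * ‖k‖) := by
        rw [norm_smul, norm_mul, norm_mul, norm_inv]
        simp only [Real.norm_eq_abs, abs_of_pos hp]
        calc |a| * r⁻¹ * |inner ℝ W h| * ‖k‖ ≤ |a| * r⁻¹ * (r * ‖h‖) * ‖k‖ := by gcongr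
          _ = _ := by field_simp
      have j4 : ‖((b * r⁻¹ - a * (r ^ 2)⁻¹) * (r⁻¹ * inner ℝ W k) * inner ℝ W h) • W‖
          ≤ (|a| + |b| * r) * (‖h‖ * ‖k‖) := by
        have q : |b * r⁻¹ - a * (r ^ 2)⁻¹| ≤ |b| * r⁻¹ + |a| * (r ^ 2)⁻¹ := by
          refine (abs_sub _ _).trans (le_of_eq ?_)
          rw [abs_mul, abs_mul, abs_of_pos (inv_pos.2 hp), abs_of_pos (inv_pos.2 (pow_pos hp 2))]
        rw [norm_smul, norm_mul, norm_mul, norm_mul, norm_inv, ← hr]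
        simp only [Real.norm_eq_abs, abs_of_pos hp]
        calc |b * r⁻¹ - a * (r ^ 2)⁻¹| * (r⁻¹ * |inner ℝ W k|) * |inner ℝ W h| * r
            ≤ (|b| * r⁻¹ + |a| * (r ^ 2)⁻¹) * (r⁻¹ * (r * ‖k‖)) * (r * ‖h‖) * r := by gcongr
          _ = _ := by field_simp; ring
      have m := mul_le_mul_of_nonneg_right key (mul_nonneg (norm_nonneg h) (norm_nonneg k))
      have n4 := norm_add₄_le (a := (a * r⁻¹ * inner ℝ W k) • h) (b := (a * r⁻¹ * inner ℝ h k) • W)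
        (c := (a * r⁻¹ * inner ℝ W h) • k)
        (d := ((b * r⁻¹ - a * (r ^ 2)⁻¹) * (r⁻¹ * inner ℝ W k) * inner ℝ W h) • W)
      linarith
    apply e
    ext i
    simp
    ring

lemma A_lip (ν : ℝ → ℝ) (ctil c₇ : ℝ)
    (hC3 : ContDiff ℝ 3 ν)
    (hb : ∀ s > (0:ℝ), |deriv ν s| / s ≤ ctil)
    (hc7 : 0 ≤ c₇)
    (h7 : ∀ s ≥ (0:ℝ), 4 * |deriv ν s| + |deriv (deriv ν) s| * s ≤ c₇) (V W : EV) :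
    ‖Amap ν W - Amap ν V‖ ≤ c₇ * ‖W - V‖ := by
  have hd : Differentiable ℝ ν := hC3.differentiable (by norm_num)
  have hd2 : Differentiable ℝ (deriv ν) := by
    have h2 : ContDiff ℝ (2 + 1) ν := by
      convert hC3 using 1
      norm_num
    exact ((contDiff_succ_iff_deriv.1 h2).2.2).differentiable (by norm_num)
  have h0 := deriv_zero_aux ν ctil hC3 hb
  refine ContinuousLinearMap.opNorm_le_bound _ (by positivity) fun h => ?_
  have hex : ∀ W : EV, ∃ D : EV →L[ℝ] EV,
      HasFDerivAt (fun W => Amap ν W h) D W ∧ ‖D‖ ≤ c₇ * ‖h‖ := by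
    intro W
    by_cases hW : W = 0
    · subst hW
      exact ⟨0, hasFDerivAt_A_zero ν ctil hd h0 hb h, by simp; positivity⟩
    · exact hasFDerivAt_A ν c₇ hd hd2 h7 h W hW
  choose D hD hDb using hex
  have := Convex.norm_image_sub_le_of_norm_hasFDerivWithin_le (𝕜 := ℝ) (s := Set.univ)
    (fun x _ => (hD x).hasFDerivWithinAt) (fun x _ => hDb x) convex_univ
    (Set.mem_univ V) (Set.mem_univ W)
  calc _ ≤ c₇ * ‖h‖ * ‖W - V‖ := this
    _ = _ := by ring

/-- `|S_φ(ψ₂) − S_φ(ψ₁)| ≤ c₇|ψ₂ − ψ₁|(|ψ₁| + |ψ₂|)`. -/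
theorem S_diff_second_arg (ν : ℝ → ℝ) (ctil c₇ : ℝ)
    (hC3 : ContDiff ℝ 3 ν)
    (hb : ∀ s > (0:ℝ), |deriv ν s| / s ≤ ctil)
    (hc7 : 0 ≤ c₇)
    (h7 : ∀ s ≥ (0:ℝ), 4 * |deriv ν s| + |deriv (deriv ν) s| * s ≤ c₇) :
    ∀ φ ψ₁ ψ₂ : EuclideanSpace ℝ (Fin 2),
      ‖Smap ν φ ψ₂ - Smap ν φ ψ₁‖ ≤ c₇ * ‖ψ₂ - ψ₁‖ * (‖ψ₁‖ + ‖ψ₂‖) := by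
  intro φ ψ₁ ψ₂
  have hd : Differentiable ℝ ν := hC3.differentiable (by norm_num)
  have hT := hasFDerivAt_T ν hd (deriv_zero_aux ν ctil hC3 hb)
  have hm := Convex.norm_image_sub_le_of_norm_hasFDerivWithin_le' (𝕜 := ℝ) (f := Tmap ν)
    (f' := Amap ν) (φ := Amap ν φ) (C := c₇ * (‖ψ₁‖ + ‖ψ₂‖))
    (s := Metric.closedBall φ (‖ψ₁‖ + ‖ψ₂‖)) (x := φ + ψ₁) (y := φ + ψ₂)
    (fun x _ => (hT x).hasFDerivWithinAt)
    (fun x hx => (A_lip ν ctil c₇ hC3 hb hc7 h7 φ x).trans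
      (mul_le_mul_of_nonneg_left (mem_closedBall_iff_norm.1 hx) hc7))
    (convex_closedBall _ _) (by simp) (by simp)
  have e : Smap ν φ ψ₂ - Smap ν φ ψ₁ =
      Tmap ν (φ + ψ₂) - Tmap ν (φ + ψ₁) - Amap ν φ (φ + ψ₂ - (φ + ψ₁)) := by
    rw [add_sub_add_left_eq_sub, map_sub]
    unfold Smap
    rw [(hT φ).fderiv]
    abel
  rw [e]
  refine hm.trans (le_of_eq ?_)
  rw [add_sub_add_left_eq_sub]
  ring


end
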